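/- Let (M, Ω, V) be a graded von Neumann algebra with M a factor. Then the V-twisted center Z(M, V) is at most one-dimensional as a complex vector space: either Z(M, V) = {0}, or there is a unitary u ∈ Z(M, V) with Z(M, V) = ℂ·u. -/

import Mathlib

open scoped InnerProductSpace ComplexOrder

noncomputable section

variable {H : Type*} [NormedAddCommGroup H] [InnerProductSpace ℂ H] [CompleteSpace H]

/-- A graded von Neumann algebra in standard form: a von Neumann algebra `M` with a cyclic
and separating vector `Ω`, the associated modular data `(J, Δ^{it})` (characterized by the
Tomita-Takesaki relations below), and a `ℤ₂`-grading `V`. -/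
structure GradedVN (H : Type*) [NormedAddCommGroup H] [InnerProductSpace ℂ H]
    [CompleteSpace H] where
  M : VonNeumannAlgebra H
  Ω : H
  cyclic : Dense {ξ : H | ∃ x ∈ M, x Ω = ξ}
  separating : ∀ x ∈ M, x Ω = 0 → x = 0
  /-- the modular conjugation (an antiunitary involution) -/
  J : H → H
  J_add : ∀ ξ η, J (ξ + η) = J ξ + J η
  J_smul : ∀ (c : ℂ) (ξ), J (c • ξ) = starRingEnd ℂ c • J ξ
  J_inner : ∀ ξ η, ⟪J ξ, J η⟫_ℂ = ⟪η, ξ⟫_ℂ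
  J_invol : ∀ ξ, J (J ξ) = ξ
  J_Ω : J Ω = Ω
  /-- the modular group `Δ^{it}` -/
  U : ℝ → H ≃ₗᵢ[ℂ] H
  U_zero : ∀ ξ, U 0 ξ = ξ
  U_add : ∀ s t ξ, U (s + t) ξ = U s (U t ξ)
  U_cont : ∀ ξ, Continuous fun t : ℝ => U t ξ
  U_Ω : ∀ t, U t Ω = Ω
  J_U : ∀ t ξ, J (U t ξ) = U t (J ξ)
  flow_mem : ∀ t : ℝ, ∀ x ∈ M, ∃ y ∈ M, ∀ ξ, y ξ = U t (x (U (-t) ξ))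
  /-- `J M J ⊆ M'` -/
  tomita : ∀ x ∈ M, ∀ y ∈ M, ∀ ξ, J (x (J (y ξ))) = y (J (x (J ξ)))
  /-- `S = J Δ^{1/2}` maps `xΩ` to `x*Ω`, expressed via analytic continuation of the
  modular group. -/
  S_cond : ∀ x ∈ M, ∀ f : ℂ → H, Differentiable ℂ f → (∀ t : ℝ, f (t : ℂ) = U t (x Ω)) →
    J (f (-(Complex.I) / 2)) = star x Ω
  /-- the grading -/
  V : H →L[ℂ] H
  V_star : star V = V
  V_invol : ∀ ξ, V (V ξ) = ξ
  V_Ω : V Ω = Ω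
  V_mem : ∀ x ∈ M, ∃ y ∈ M, ∀ ξ, y ξ = V (x (V ξ))

namespace GradedVN

variable (N : GradedVN H)

/-- The `V`-twisted center `Z(M, V) = {x ∈ M | J x* J = x V}`. -/
def twistedCenter : Set (H →L[ℂ] H) :=
  {x | x ∈ N.M ∧ ∀ ξ, N.J (star x (N.J ξ)) = x (N.V ξ)}

/-- The center `Z(M)` of `M`. -/
def centerSet : Set (H →L[ℂ] H) :=
  {z | z ∈ N.M ∧ ∀ y ∈ N.M, z * y = y * z}

/-- The `Ad_V`-fixed points `M^γ`. -/
def gammaFixed : Set (H →L[ℂ] H) :=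
  {x | x ∈ N.M ∧ ∀ ξ, N.V (x (N.V ξ)) = x ξ}

/-- The fixed points `M^α` of the modular flow. -/
def flowFixed : Set (H →L[ℂ] H) :=
  {x | x ∈ N.M ∧ ∀ (t : ℝ) (ξ), x (N.U t ξ) = N.U t (x ξ)}

/-- The centralizer `Z_Ω(M)`. -/
def centralizerSet : Set (H →L[ℂ] H) :=
  {x | x ∈ N.M ∧ ∀ y ∈ N.M, ⟪N.Ω, x (y N.Ω)⟫_ℂ = ⟪N.Ω, y (x N.Ω)⟫_ℂ}

/-- The twisted center of the reduced algebra `(M_p, V_p)` for a central `Ad_V`-invariant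
projection `p` (for such `p`, the modular conjugation of `(pMp, pΩ)` is `J` restricted
to `pH`, so the relative twisted center consists of the `p`-supported elements of `M`
satisfying the twisted-center relation). -/
def tcRel (p : H →L[ℂ] H) : Set (H →L[ℂ] H) :=
  {x | x ∈ N.M ∧ x * p = x ∧ p * x = x ∧ ∀ ξ, N.J (star x (N.J ξ)) = x (N.V ξ)}

/-- `p` is an `Ad_V`-invariant central projection. -/
def IsCentralInvProj (p : H →L[ℂ] H) : Prop :=
  p ∈ N.centerSet ∧ star p = p ∧ p * p = p ∧ ∀ ξ, N.V (p (N.V ξ)) = p ξ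

/-- `p` is an `Ad_V`-invariant central projection carrying a partial isometry in the
relative twisted center which is unitary on `pH`. -/
def HasPI (p : H →L[ℂ] H) : Prop :=
  N.IsCentralInvProj p ∧ ∃ u ∈ N.tcRel p, star u * u = p ∧ u * star u = p

/-- Asymptotically abelian modular flow: `[α_t(x), y] → 0` weakly as `t → ∞`. -/
def AsympAbelian : Prop :=
  ∀ x ∈ N.M, ∀ y ∈ N.M, ∀ ξ η : H,
    Filter.Tendsto
      (fun t : ℝ => ⟪ξ, N.U t (x (N.U (-t) (y η))) - y (N.U t (x (N.U (-t) η)))⟫_ℂ)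
      Filter.atTop (nhds 0)

/-- `V`-graded asymptotically abelian modular flow:
`[α_t(x), y]_V = α_t(x) y − (V y V) α_t(x) → 0` weakly as `t → ∞`. -/
def GradedAsympAbelian : Prop :=
  ∀ x ∈ N.M, ∀ y ∈ N.M, ∀ ξ η : H,
    Filter.Tendsto
      (fun t : ℝ =>
        ⟪ξ, N.U t (x (N.U (-t) (y η))) - N.V (y (N.V (N.U t (x (N.U (-t) η)))))⟫_ℂ)
      Filter.atTop (nhds 0)

end GradedVN

/-!
If `x` lies in the twisted center then `x V = J x* J` lies in the commutant `M'`. Hence for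
`x, z` in the twisted center both `x z* = (x V) (z V)*` and `z* x = V ((z V)* (x V)) V` lie in
`M ∩ M'`, so they are scalars when `M` is a factor. By positivity the scalars `x* x` and `x x*`
are both `‖x‖²`, so a nonzero `x` is a multiple of a unitary `u`, and then every `w` in the
twisted center is `(w u*) u ∈ ℂ u`.
-/

section CStarAlgebra

variable {A : Type*} [CStarAlgebra A]

theorem star_mul_self_eq_norm_sq_smul_one {x : A} (h : ∃ c : ℂ, star x * x = c • 1) :
    star x * x = ((‖x‖ : ℂ) ^ 2) • 1 := by
  obtain ⟨c, hc⟩ := h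
  nontriviality A
  have c_real : star c = c := by
    have h_star := congrArg star hc
    rw [star_mul, star_star, hc, star_smul, star_one] at h_star
    exact (smul_left_injective ℂ one_ne_zero h_star).symm
  obtain ⟨r, rfl⟩ := Complex.conj_eq_iff_real.mp c_real
  have r_nonneg : 0 ≤ r := by
    refine spectrum_star_mul_self_nonneg (b := x) r ?_
    rw [hc, Complex.coe_smul, ← Algebra.algebraMap_eq_smul_one, spectrum.scalar_eq]
    exact Set.mem_singleton r
  have norm_sq_eq : ‖x‖ ^ 2 = r := by
    rw [sq, ← CStarRing.norm_star_mul_self, hc, norm_smul, norm_one, mul_one,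
      Complex.norm_of_nonneg r_nonneg]
  rw [hc, ← norm_sq_eq, Complex.ofReal_pow]

theorem norm_inv_smul_mem_unitary {x : A} (hx : x ≠ 0) (h_left : ∃ c : ℂ, star x * x = c • 1)
    (h_right : ∃ c : ℂ, x * star x = c • 1) : (‖x‖ : ℂ)⁻¹ • x ∈ unitary A := by
  have star_mul_self_eq := star_mul_self_eq_norm_sq_smul_one h_left
  have mul_star_self_eq := star_mul_self_eq_norm_sq_smul_one (x := star x) (by rwa [star_star])
  rw [star_star, norm_star] at mul_star_self_eq
  have norm_ne_zero : (‖x‖ : ℂ) ≠ 0 := by exact_mod_cast norm_ne_zero_iff.mpr hx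
  have star_inv_norm : star (‖x‖ : ℂ)⁻¹ = (‖x‖ : ℂ)⁻¹ := by simp
  have inv_mul_inv_mul_sq : (‖x‖ : ℂ)⁻¹ * (‖x‖ : ℂ)⁻¹ * (‖x‖ : ℂ) ^ 2 = 1 := by field_simp
  rw [Unitary.mem_iff, star_smul, star_inv_norm, smul_mul_smul_comm, smul_mul_smul_comm,
    star_mul_self_eq, mul_star_self_eq, smul_smul, inv_mul_inv_mul_sq, one_smul]
  exact ⟨rfl, rfl⟩

theorem eq_bot_or_eq_span_unitary {Z : Submodule ℂ A}
    (h_star_mul : ∀ x ∈ Z, ∃ c : ℂ, star x * x = c • 1)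
    (h_mul_star : ∀ x ∈ Z, ∀ z ∈ Z, ∃ c : ℂ, x * star z = c • 1) :
    Z = ⊥ ∨ ∃ u ∈ unitary A, Z = ℂ ∙ u := by
  refine or_iff_not_imp_left.mpr fun hZ => ?_
  obtain ⟨x, hx, hx_ne⟩ := Z.exists_mem_ne_zero_of_ne_bot hZ
  set u := (‖x‖ : ℂ)⁻¹ • x
  have hu_mem : u ∈ Z := Z.smul_mem _ hx
  have hu : u ∈ unitary A :=
    norm_inv_smul_mem_unitary hx_ne (h_star_mul x hx) (h_mul_star x hx x hx)
  have span_le : ℂ ∙ u ≤ Z := (Submodule.span_singleton_le_iff_mem u Z).mpr hu_mem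
  refine ⟨u, hu, le_antisymm (fun w hw => ?_) span_le⟩
  obtain ⟨c, hc⟩ := h_mul_star w hw u hu_mem
  refine Submodule.mem_span_singleton.mpr ⟨c, ?_⟩
  calc c • u = w * star u * u := by rw [hc, smul_one_mul]
    _ = w := by rw [mul_assoc, Unitary.star_mul_self_of_mem hu, mul_one]

end CStarAlgebra

namespace GradedVN

variable {N : GradedVN H} {x y z : H →L[ℂ] H}

theorem V_mul_V : N.V * N.V = 1 :=
  ContinuousLinearMap.ext N.V_invol

theorem V_mul_mul_V_mem (hy : y ∈ N.M) : N.V * y * N.V ∈ N.M := by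
  obtain ⟨w, hw, hw_apply⟩ := N.V_mem y hy
  rwa [← show w = N.V * y * N.V from ContinuousLinearMap.ext hw_apply]

theorem V_mul_mul_V_mem_commutant (hy : y ∈ N.M.commutant) :
    N.V * y * N.V ∈ N.M.commutant := by
  rw [VonNeumannAlgebra.mem_commutant_iff] at hy ⊢
  intro g hg
  have h := hy _ (V_mul_mul_V_mem hg)
  calc g * (N.V * y * N.V) = N.V * (N.V * g * N.V * y) * N.V := by
        simp only [← mul_assoc, V_mul_V, one_mul]
    _ = N.V * (y * (N.V * g * N.V)) * N.V := by rw [h]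
    _ = N.V * y * N.V * g := by simp only [mul_assoc, V_mul_V, mul_one]

theorem mem_centerSet_iff : z ∈ N.centerSet ↔ z ∈ N.M ∧ z ∈ N.M.commutant := by
  simp only [centerSet, Set.mem_ofPred_eq, VonNeumannAlgebra.mem_commutant_iff, eq_comm]

theorem mul_V_mem_commutant (hx : x ∈ N.twistedCenter) : x * N.V ∈ N.M.commutant := by
  refine VonNeumannAlgebra.mem_commutant_iff.mpr fun y hy => ContinuousLinearMap.ext fun ξ => ?_
  have h := N.tomita (star x) (star_mem hx.1) y hy ξ
  rw [hx.2, hx.2] at h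
  exact h.symm

theorem mul_star_mem_centerSet (hx : x ∈ N.twistedCenter) (hz : z ∈ N.twistedCenter) :
    x * star z ∈ N.centerSet := by
  refine mem_centerSet_iff.mpr ⟨mul_mem hx.1 (star_mem hz.1), ?_⟩
  have h_eq : x * N.V * star (z * N.V) = x * star z := by
    rw [star_mul, N.V_star, mul_assoc, ← mul_assoc N.V, V_mul_V, one_mul]
  rw [← h_eq]
  exact mul_mem (mul_V_mem_commutant hx) (star_mem (mul_V_mem_commutant hz))

theorem star_mul_mem_centerSet (hx : x ∈ N.twistedCenter) (hz : z ∈ N.twistedCenter) :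
    star z * x ∈ N.centerSet := by
  refine mem_centerSet_iff.mpr ⟨mul_mem (star_mem hz.1) hx.1, ?_⟩
  have h_eq : N.V * (star (z * N.V) * (x * N.V)) * N.V = star z * x := by
    rw [star_mul, N.V_star]
    simp only [mul_assoc, V_mul_V, mul_one]
    rw [← mul_assoc N.V, V_mul_V, one_mul]
  rw [← h_eq]
  exact V_mul_mul_V_mem_commutant
    (mul_mem (star_mem (mul_V_mem_commutant hz)) (mul_V_mem_commutant hx))

theorem J_zero : N.J 0 = 0 := by
  simpa using N.J_smul 0 0

variable (N) in
/-- The twisted center `Z(M, V)` as a complex vector space, which makes the one-dimensionality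
criterion for subspaces of a C⋆-algebra applicable. It is a subspace because `x ↦ J x* J` is
linear, being a composite of two antilinear maps. -/
def twistedCenterSubmodule : Submodule ℂ (H →L[ℂ] H) where
  carrier := N.twistedCenter
  zero_mem' := ⟨zero_mem N.M, fun ξ => by simp [J_zero]⟩
  add_mem' hx hz := ⟨add_mem hx.1 hz.1, fun ξ => by simp [N.J_add, hx.2, hz.2]⟩
  smul_mem' c x hx :=
    ⟨N.M.toStarSubalgebra.smul_mem hx.1 c, fun ξ => by simp [N.J_smul, hx.2]⟩

end GradedVN

/-- If `M` is a factor, the twisted center `Z(M, V)` is at most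
one-dimensional: either `Z(M, V) = {0}`, or there is a unitary `u ∈ Z(M, V)` with
`Z(M, V) = ℂ · u`. -/
theorem twisted_center_of_factor {H : Type*} [NormedAddCommGroup H]
    [InnerProductSpace ℂ H] [CompleteSpace H] (N : GradedVN H)
    (hfactor : ∀ z ∈ N.centerSet, ∃ c : ℂ, z = c • (1 : H →L[ℂ] H)) :
    N.twistedCenter = {0} ∨
      ∃ u ∈ N.twistedCenter, star u * u = 1 ∧ u * star u = 1 ∧
        N.twistedCenter = {x : H →L[ℂ] H | ∃ c : ℂ, x = c • u} := by
  have span_or := eq_bot_or_eq_span_unitary (Z := N.twistedCenterSubmodule)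
    (fun x hx => hfactor _ (GradedVN.star_mul_mem_centerSet hx hx))
    (fun x hx z hz => hfactor _ (GradedVN.mul_star_mem_centerSet hx hz))
  refine span_or.imp (congrArg SetLike.coe) ?_
  rintro ⟨u, hu, hspan⟩
  refine ⟨u, hspan.ge (Submodule.mem_span_singleton_self u), hu.1, hu.2, Set.ext fun x => ?_⟩
  calc x ∈ N.twistedCenter ↔ x ∈ ℂ ∙ u := SetLike.ext_iff.mp hspan x
    _ ↔ ∃ c : ℂ, x = c • u := by simp only [Submodule.mem_span_singleton, eq_comm]

end
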